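/- Let F : ℝ^d × ℝ^d → ℝ^d and fix z = (x_1,…,x_N) ∈ (ℝ^d)^N. Let C_i denote the random batch containing index i under a uniformly random partition of {1,…,N} into n batches of size p, and define the noise χ_i(z) = (1/N)·Σ_{j≠i} F(x_i,x_j) − (1−1/N)·(1/(p−1))·Σ_{j∈C_i, j≠i} F(x_i,x_j). Then E[χ_i(z)] = 0. -/

import Mathlib

open Finset

/-- A finset `P` of subsets of `{1,…,N}` (modeled as `Fin N`) is a batch partition into
`n` batches of size `p` if it has `n` members, each of size `p`, and every index lies in
exactly one member. -/
def IsBatchPartition (N n p : ℕ) (P : Finset (Finset (Fin N))) : Prop :=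
  P.card = n ∧ (∀ B ∈ P, B.card = p) ∧ ∀ i : Fin N, (P.filter fun B => i ∈ B).card = 1

instance (N n p : ℕ) : DecidablePred (IsBatchPartition N n p) := fun P => by
  unfold IsBatchPartition; infer_instance

/-- The batch containing index `i` in the partition `P`: the set of indices lying in a
common member of `P` with `i`. -/
def batchOf {N n p : ℕ} (P : {P : Finset (Finset (Fin N)) // IsBatchPartition N n p P})
    (i : Fin N) : Finset (Fin N) :=
  Finset.univ.filter fun j => ∃ B ∈ P.1, i ∈ B ∧ j ∈ B

/-- The random-batch noise `χ_i(z)`: the difference between the full interaction force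
`(1/N)·Σ_{j≠i} F(x_i,x_j)` and the random-batch force
`(1−1/N)·(1/(p−1))·Σ_{j∈C_i, j≠i} F(x_i,x_j)`, where `C_i` is the batch containing `i`. -/
noncomputable def rbmNoise {d N n p : ℕ} (F : EuclideanSpace ℝ (Fin d) →
      EuclideanSpace ℝ (Fin d) → EuclideanSpace ℝ (Fin d))
    (x : Fin N → EuclideanSpace ℝ (Fin d)) (i : Fin N)
    (P : {P : Finset (Finset (Fin N)) // IsBatchPartition N n p P}) :
    EuclideanSpace ℝ (Fin d) :=
  ((N : ℝ)⁻¹) • ∑ j ∈ Finset.univ.erase i, F (x i) (x j)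
    - ((1 - (N : ℝ)⁻¹) * ((p : ℝ) - 1)⁻¹) • ∑ j ∈ (batchOf P i).erase i, F (x i) (x j)

/- Exchanging two indices `j, k ≠ i` is a bijection on the batch partitions that fixes `i`, so the
number of partitions with `j ∈ C_i` does not depend on `j ≠ i`. Hence every `j ≠ i` has the same
chance of being a companion of `i`; as `i` always has `p - 1` companions among `N - 1` candidates,
this chance is `(p - 1) / (N - 1)`, which the weight `(1 - 1/N) / (p - 1)` turns into `1 / N`. -/

section UniformCovering

variable {Ω α M : Type*} [Fintype Ω] [DecidableEq α] [AddCommMonoid M]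
  {S : Ω → Finset α} {t : Finset α}

theorem sum_sum_eq_sum_card_filter_mem_smul (hSt : ∀ ω, S ω ⊆ t) (f : α → M) :
    ∑ ω, ∑ j ∈ S ω, f j = ∑ j ∈ t, #{ω | j ∈ S ω} • f j :=
  calc ∑ ω, ∑ j ∈ S ω, f j = ∑ j ∈ t, ∑ ω with j ∈ S ω, f j :=
        sum_comm' fun ω j => by simpa using @hSt ω j
    _ = ∑ j ∈ t, #{ω | j ∈ S ω} • f j := by simp only [sum_const]

theorem card_mul_card_filter_mem_eq {m : ℕ} {j : α} (hSt : ∀ ω, S ω ⊆ t)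
    (hm : ∀ ω, #(S ω) = m) (hj : ∀ k ∈ t, #{ω | k ∈ S ω} = #{ω | j ∈ S ω}) :
    #t * #{ω | j ∈ S ω} = Fintype.card Ω * m :=
  calc #t * #{ω | j ∈ S ω} = ∑ k ∈ t, #{ω | k ∈ S ω} := by
        rw [sum_congr rfl hj, sum_const, smul_eq_mul]
    _ = ∑ ω, #(S ω) := by
        simpa using (sum_sum_eq_sum_card_filter_mem_smul hSt fun _ => (1 : ℕ)).symm
    _ = Fintype.card Ω * m := by simp [hm]

theorem card_smul_sum_sum_eq_of_card_filter_mem_eq {m : ℕ} (hSt : ∀ ω, S ω ⊆ t)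
    (hm : ∀ ω, #(S ω) = m) (hS : ∀ j ∈ t, ∀ k ∈ t, #{ω | k ∈ S ω} = #{ω | j ∈ S ω}) (f : α → M) :
    #t • ∑ ω, ∑ j ∈ S ω, f j = (Fintype.card Ω * m) • ∑ j ∈ t, f j := by
  rw [sum_sum_eq_sum_card_filter_mem_smul hSt, smul_sum, smul_sum]
  refine sum_congr rfl fun j hj => ?_
  rw [smul_smul, card_mul_card_filter_mem_eq hSt hm (hS j hj)]

end UniformCovering

/-- The sample space of random batch divisions: partitions of `Fin N` into `n` batches of size
`p`. It is reducible, so that it agrees with the subtype `batchOf` and `rbmNoise` are about. -/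
abbrev BatchPartition (N n p : ℕ) : Type :=
  {P : Finset (Finset (Fin N)) // IsBatchPartition N n p P}

namespace BatchPartition

variable {N n p : ℕ}

theorem filter_mem_eq_singleton_batchOf (P : BatchPartition N n p) (i : Fin N) :
    {B ∈ P.1 | i ∈ B} = {batchOf P i} := by
  obtain ⟨B, hB⟩ := card_eq_one.mp (P.2.2.2 i)
  have mem_iff (C : Finset (Fin N)) : C ∈ P.1 ∧ i ∈ C ↔ C = B := by
    rw [← mem_filter (p := (i ∈ ·)), hB, mem_singleton]
  rw [hB, singleton_inj]
  ext j
  simp [batchOf, ← and_assoc, mem_iff]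

theorem batchOf_mem_filter_mem (P : BatchPartition N n p) (i : Fin N) :
    batchOf P i ∈ {B ∈ P.1 | i ∈ B} := by
  rw [filter_mem_eq_singleton_batchOf]
  exact mem_singleton_self _

theorem self_mem_batchOf (P : BatchPartition N n p) (i : Fin N) : i ∈ batchOf P i :=
  (mem_filter.mp (batchOf_mem_filter_mem P i)).2

theorem card_batchOf (P : BatchPartition N n p) (i : Fin N) : #(batchOf P i) = p :=
  P.2.2.1 _ (mem_filter.mp (batchOf_mem_filter_mem P i)).1

theorem card_batchOf_erase (P : BatchPartition N n p) (i : Fin N) :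
    #((batchOf P i).erase i) = p - 1 := by
  rw [card_erase_of_mem (self_mem_batchOf P i), card_batchOf]

theorem isBatchPartition_finsetCongr_iff (σ : Equiv.Perm (Fin N)) (P : Finset (Finset (Fin N))) :
    IsBatchPartition N n p (σ.finsetCongr.finsetCongr P) ↔ IsBatchPartition N n p P := by
  have card_filter_mem (i : Fin N) :
      #{B ∈ σ.finsetCongr.finsetCongr P | σ i ∈ B} = #{B ∈ P | i ∈ B} := by
    simp [filter_map, Function.comp_def]
  have card_eq_iff : (∀ B ∈ σ.finsetCongr.finsetCongr P, #B = p) ↔ ∀ B ∈ P, #B = p := by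
    simp only [Equiv.finsetCongr_apply, forall_mem_map, Equiv.coe_toEmbedding, card_map]
  rw [IsBatchPartition, IsBatchPartition, card_eq_iff, ← σ.forall_congr_right]
  simp only [card_filter_mem]
  rw [Equiv.finsetCongr_apply, card_map]

/-- The action of a permutation of the indices on batch partitions. -/
def relabel (σ : Equiv.Perm (Fin N)) : BatchPartition N n p ≃ BatchPartition N n p :=
  σ.finsetCongr.finsetCongr.subtypeEquiv fun P => (isBatchPartition_finsetCongr_iff σ P).symm

theorem apply_mem_batchOf_relabel_iff (σ : Equiv.Perm (Fin N)) (P : BatchPartition N n p)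
    {i j : Fin N} : σ j ∈ batchOf (relabel σ P) (σ i) ↔ j ∈ batchOf P i := by
  have mem_iff (B : Finset (Fin N)) : σ.finsetCongr B ∈ (relabel σ P).1 ↔ B ∈ P.1 := mem_map' _
  simp only [batchOf, mem_filter_univ]
  rw [← σ.finsetCongr.exists_congr_right]
  simp only [mem_iff]
  simp

theorem card_filter_mem_batchOf_eq {i j k : Fin N} (hj : j ≠ i) (hk : k ≠ i) :
    #{P : BatchPartition N n p | j ∈ batchOf P i} =
      #{P : BatchPartition N n p | k ∈ batchOf P i} := by
  refine card_equiv (relabel (Equiv.swap j k)) fun P => ?_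
  have swap_mem := apply_mem_batchOf_relabel_iff (Equiv.swap j k) P (i := i) (j := j)
  rw [Equiv.swap_apply_left, Equiv.swap_apply_of_ne_of_ne hj.symm hk.symm] at swap_mem
  simpa using swap_mem.symm

theorem pred_smul_sum_sum_batchOf_erase {M : Type*} [AddCommMonoid M] (f : Fin N → M) (i : Fin N) :
    (N - 1) • ∑ P : BatchPartition N n p, ∑ j ∈ (batchOf P i).erase i, f j =
      (Fintype.card (BatchPartition N n p) * (p - 1)) • ∑ j ∈ univ.erase i, f j := by
  have uniform : ∀ j ∈ univ.erase i, ∀ k ∈ univ.erase i,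
      #{P : BatchPartition N n p | k ∈ (batchOf P i).erase i} =
        #{P : BatchPartition N n p | j ∈ (batchOf P i).erase i} := fun j hj k hk => by
    simpa [ne_of_mem_erase hj, ne_of_mem_erase hk] using
      card_filter_mem_batchOf_eq (ne_of_mem_erase hk) (ne_of_mem_erase hj)
  simpa using card_smul_sum_sum_eq_of_card_filter_mem_eq
    (fun P => erase_subset_erase i (subset_univ (batchOf P i))) (card_batchOf_erase · i) uniform f

end BatchPartition

theorem rbm_noise_mean_zero_general {𝕜 E : Type*} [Field 𝕜] [CharZero 𝕜] [AddCommGroup E]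
    [Module 𝕜 E] {n p N : ℕ} (hp : 2 ≤ p) (f : Fin N → E) (i : Fin N) :
    ∑ P : BatchPartition N n p,
      ((N : 𝕜)⁻¹ • ∑ j ∈ univ.erase i, f j -
        ((1 - (N : 𝕜)⁻¹) * ((p : 𝕜) - 1)⁻¹) • ∑ j ∈ (batchOf P i).erase i, f j) = 0 := by
  have hN0 : (N : 𝕜) ≠ 0 := Nat.cast_ne_zero.mpr i.pos.ne'
  have hp1 : ((p - 1 : ℕ) : 𝕜) ≠ 0 := Nat.cast_ne_zero.mpr (by lia)
  have weight_eq : (1 - (N : 𝕜)⁻¹) * ((p : 𝕜) - 1)⁻¹ =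
      ((N : 𝕜)⁻¹ * ((p - 1 : ℕ) : 𝕜)⁻¹) * (N - 1 : ℕ) := by
    rw [Nat.cast_pred i.pos, Nat.cast_pred (by lia : 0 < p)]
    field_simp
  have sum_batch_force : ((1 - (N : 𝕜)⁻¹) * ((p : 𝕜) - 1)⁻¹) •
      ∑ P : BatchPartition N n p, ∑ j ∈ (batchOf P i).erase i, f j =
        Fintype.card (BatchPartition N n p) • (N : 𝕜)⁻¹ • ∑ j ∈ univ.erase i, f j := by
    rw [weight_eq, mul_smul, Nat.cast_smul_eq_nsmul, BatchPartition.pred_smul_sum_sum_batchOf_erase,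
      ← Nat.cast_smul_eq_nsmul 𝕜, ← Nat.cast_smul_eq_nsmul 𝕜, smul_smul, smul_smul, Nat.cast_mul]
    congr 1
    field_simp
  rw [sum_sub_distrib, sum_const, card_univ, ← smul_sum, sum_batch_force, sub_self]

/-- Under a uniformly random partition of `{1,…,N}` into `n` batches of size `p`
(`N = pn`, `p ≥ 2`), the random-batch noise `χ_i(z)` has zero expectation:
the average of `χ_i(z)` over all batch partitions vanishes. -/
theorem rbm_noise_mean_zero (d n p N : ℕ) (hn : 1 ≤ n) (hp : 2 ≤ p) (hN : N = p * n)
    (F : EuclideanSpace ℝ (Fin d) → EuclideanSpace ℝ (Fin d) → EuclideanSpace ℝ (Fin d))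
    (x : Fin N → EuclideanSpace ℝ (Fin d)) (i : Fin N) :
    (((Finset.univ : Finset {P : Finset (Finset (Fin N)) // IsBatchPartition N n p P}).card
        : ℝ)⁻¹) •
      ∑ P : {P : Finset (Finset (Fin N)) // IsBatchPartition N n p P}, rbmNoise F x i P
      = 0 := by
  rw [show ∑ P, rbmNoise F x i P = 0 from
    rbm_noise_mean_zero_general hp (fun j => F (x i) (x j)) i, smul_zero]
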